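/- Stanley's Hook Content Formula: for a partition λ with at most r rows, s_λ(q, q², …, q^r) = q^{B(λ)} · ∏_{(i,j) ∈ [λ]} (q^{r + j − i} − 1)/(q^{h_{(i,j)}(λ)} − 1), where B(λ) = Σ_i i·λ_i. -/

import Mathlib

/-- `t` is a semistandard Young tableau of shape `λ` (row lengths `l`) with
entries in `{1, …, r}`: rows weakly increase west to east, columns strictly
increase north to south, and `t` is `0` outside the diagram. -/
def IsSSYT (l : ℕ → ℕ) (r : ℕ) (t : ℕ → ℕ → ℕ) : Prop :=
  (∀ i j, 1 ≤ i → 1 ≤ j → j ≤ l i → 1 ≤ t i j ∧ t i j ≤ r) ∧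
  (∀ i j, 1 ≤ i → 1 ≤ j → j + 1 ≤ l i → t i j ≤ t i (j + 1)) ∧
  (∀ i j, 1 ≤ i → 1 ≤ j → j ≤ l (i + 1) → t i j < t (i + 1) j) ∧
  (∀ i j, ¬(1 ≤ i ∧ 1 ≤ j ∧ j ≤ l i) → t i j = 0)

/-- `|t|`, the sum of the entries of the tableau `t` of shape `l`
(with at most `r` rows). -/
def wt (l : ℕ → ℕ) (r : ℕ) (t : ℕ → ℕ → ℕ) : ℕ :=
  ∑ i ∈ Finset.Icc 1 r, ∑ j ∈ Finset.Icc 1 (l i), t i j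

/-- The hook length of the box `(i, j) ∈ [λ]`: arm `l i - j`, plus leg, plus one. -/
def hin (l : ℕ → ℕ) (r i j : ℕ) : ℕ :=
  1 + (l i - j) + ((Finset.Icc (i + 1) r).filter (fun i' => j ≤ l i')).card


/-- Extend a tuple to a shape with 1-based indices. -/
def shp (n : ℕ) (a : Fin n → ℕ) (i : ℕ) : ℕ :=
  if h : 1 ≤ i ∧ i ≤ n then a ⟨i - 1, by omega⟩ else 0

/-- Fill the boxes of shape a outside b by n+1. -/
def glue (n : ℕ) (a b : ℕ → ℕ) (t : ℕ → ℕ → ℕ) : ℕ → ℕ → ℕ := fun i j =>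
  if 1 ≤ i ∧ 1 ≤ j ∧ j ≤ a i then (if j ≤ b i then t i j else n + 1) else 0

lemma glue_pos (n : ℕ) (a b : ℕ → ℕ) (t : ℕ → ℕ → ℕ) (i j : ℕ) (h1 : 1 ≤ i) (h2 : 1 ≤ j)
    (h3 : j ≤ a i) : glue n a b t i j = if j ≤ b i then t i j else n + 1 := by
  unfold glue
  rw [if_pos ⟨h1, h2, h3⟩]

/-- interlacing tuples -/
def inter (n : ℕ) (a : Fin (n + 1) → ℕ) : Finset (Fin n → ℕ) :=
  Fintype.piFinset (fun i : Fin n => Finset.Icc (a i.succ) (a i.castSucc))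

open Classical in
/-- The finset of tableaux. -/
noncomputable def tabs : (n : ℕ) → (Fin n → ℕ) → Finset (ℕ → ℕ → ℕ)
  | 0, _ => {fun _ _ => 0}
  | n + 1, a => ((inter n a).sigma (fun b => tabs n b)).image
      (fun x => glue n (shp (n + 1) a) (shp n x.1) x.2)

lemma shp_succ (n : ℕ) (a : Fin n → ℕ) (i : Fin n) : shp n a (i.1 + 1) = a i := by
  unfold shp
  rw [dif_pos (by omega)]
  rfl

lemma shp_big (n : ℕ) (a : Fin n → ℕ) (i : ℕ) (h : n < i) : shp n a i = 0 := by
  unfold shp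
  rw [dif_neg (by omega)]

lemma mem_inter (n : ℕ) (a : Fin (n + 1) → ℕ) (b : Fin n → ℕ) :
    b ∈ inter n a ↔ ∀ i, 1 ≤ i → i ≤ n → shp (n + 1) a (i + 1) ≤ shp n b i ∧
      shp n b i ≤ shp (n + 1) a i := by
  unfold inter
  rw [Fintype.mem_piFinset]
  constructor
  · intro h i h1 h2
    obtain ⟨k, rfl⟩ : ∃ k, i = k + 1 := ⟨i - 1, by omega⟩
    have := Finset.mem_Icc.1 (h ⟨k, by omega⟩)
    have e1 := shp_succ n b ⟨k, by omega⟩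
    have e2 := shp_succ (n + 1) a (Fin.succ ⟨k, by omega⟩)
    have e3 := shp_succ (n + 1) a (Fin.castSucc ⟨k, by omega⟩)
    simp only [Fin.val_succ, Fin.val_castSucc] at e1 e2 e3
    rw [e1, e2, e3]
    exact this
  · intro h i
    have := h (i.1 + 1) (by omega) (by omega)
    have e1 := shp_succ n b i
    have e2 := shp_succ (n + 1) a (Fin.succ i)
    have e3 := shp_succ (n + 1) a (Fin.castSucc i)
    simp only [Fin.val_succ, Fin.val_castSucc] at e1 e2 e3
    rw [e1, e2, e3] at this
    exact Finset.mem_Icc.2 this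

lemma inter_all (n : ℕ) (a : Fin (n + 1) → ℕ) (b : Fin n → ℕ) (hb : b ∈ inter n a) :
    ∀ i, 1 ≤ i → shp (n + 1) a (i + 1) ≤ shp n b i ∧ shp n b i ≤ shp (n + 1) a i := by
  intro i hi
  by_cases h : i ≤ n
  · exact (mem_inter n a b).1 hb i hi h
  · rw [shp_big n b i (by omega), shp_big (n + 1) a (i + 1) (by omega)]
    omega

lemma inter_anti (n : ℕ) (a : Fin (n + 1) → ℕ) (b : Fin n → ℕ) (hb : b ∈ inter n a) :
    ∀ i, 1 ≤ i → shp n b (i + 1) ≤ shp n b i := by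
  intro i hi
  exact (inter_all n a b hb (i + 1) (by omega)).2.trans (inter_all n a b hb i hi).1

lemma glue_ssyt (n : ℕ) (a b : ℕ → ℕ) (t : ℕ → ℕ → ℕ)
    (hab : ∀ i, 1 ≤ i → a (i + 1) ≤ b i ∧ b i ≤ a i) (ht : IsSSYT b n t) :
    IsSSYT a (n + 1) (glue n a b t) := by
  obtain ⟨h1, h2, h3, h4⟩ := ht
  refine ⟨?_, ?_, ?_, ?_⟩
  · intro i j hi hj hl
    unfold glue
    rw [if_pos ⟨hi, hj, hl⟩]
    split_ifs with h
    · have := h1 i j hi hj h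
      omega
    · omega
  · intro i j hi hj hl
    rw [glue_pos n a b t i j hi hj (by omega), glue_pos n a b t i (j + 1) hi (by omega) (by omega)]
    split_ifs with h h' h'
    · exact h2 i j hi hj h'
    · have := h1 i j hi hj h
      omega
    · omega
    · omega
  · intro i j hi hj hl
    have hh := hab i hi
    rw [glue_pos n a b t i j hi hj (by omega), glue_pos n a b t (i + 1) j (by omega) hj (by omega),
      if_pos (by omega : j ≤ b i)]
    split_ifs with h
    · exact h3 i j hi hj h
    · have := h1 i j hi hj (by omega)
      omega
  · intro i j h
    unfold glue
    rw [if_neg h]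

lemma row_mono (l : ℕ → ℕ) (r : ℕ) (t : ℕ → ℕ → ℕ) (ht : IsSSYT l r t) (i j k : ℕ) (hi : 1 ≤ i)
    (hj : 1 ≤ j) (hjk : j ≤ k) : k ≤ l i → t i j ≤ t i k := by
  induction k, hjk using Nat.le_induction with
  | base => intro _; exact le_rfl
  | succ k hk ih =>
    intro h
    exact (ih (by omega)).trans (ht.2.1 i k hi (by omega) h)

lemma col_ge (l : ℕ → ℕ) (r : ℕ) (t : ℕ → ℕ → ℕ) (ht : IsSSYT l r t)
    (hl : ∀ i, 1 ≤ i → l (i + 1) ≤ l i) (i j : ℕ) (hi : 1 ≤ i)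
    (hj : 1 ≤ j) : j ≤ l i → i ≤ t i j := by
  induction i, hi using Nat.le_induction with
  | base => intro h; exact (ht.1 1 j le_rfl hj h).1
  | succ k hk ih =>
    intro h
    have := ih (h.trans (hl k hk))
    have := ht.2.2.1 k j hk hj h
    omega

lemma card_init (m : ℕ) (f : ℕ → ℕ) (n : ℕ) (hf : ∀ j k, 1 ≤ j → j ≤ k → k ≤ m → f j ≤ f k)
    (j : ℕ) (hj : 1 ≤ j) (hjm : j ≤ m) :
    f j ≤ n ↔ j ≤ ((Finset.Icc 1 m).filter (fun j => f j ≤ n)).card := by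
  constructor
  · intro h
    have : Finset.Icc 1 j ⊆ (Finset.Icc 1 m).filter (fun j => f j ≤ n) := by
      intro k hk
      rw [Finset.mem_Icc] at hk
      rw [Finset.mem_filter, Finset.mem_Icc]
      exact ⟨⟨hk.1, by omega⟩, (hf k j hk.1 hk.2 hjm).trans h⟩
    have := Finset.card_le_card this
    simpa using this
  · intro h
    by_contra h'
    have : (Finset.Icc 1 m).filter (fun j => f j ≤ n) ⊆ Finset.Icc 1 (j - 1) := by
      intro k hk
      rw [Finset.mem_filter, Finset.mem_Icc] at hk
      rw [Finset.mem_Icc]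
      refine ⟨hk.1.1, ?_⟩
      by_contra h2
      have := hf j k hj (by omega) hk.1.2
      omega
    have := Finset.card_le_card this
    simp at this
    omega

lemma unglue (n : ℕ) (a : Fin (n + 1) → ℕ) (ha : ∀ i, 1 ≤ i → shp (n + 1) a (i + 1) ≤ shp (n + 1) a i)
    (t : ℕ → ℕ → ℕ) (ht : IsSSYT (shp (n + 1) a) (n + 1) t) :
    ∃ b ∈ inter n a, ∃ s, IsSSYT (shp n b) n s ∧ glue n (shp (n + 1) a) (shp n b) s = t := by
  set A := shp (n + 1) a with hA
  let b : Fin n → ℕ := fun i => ((Finset.Icc 1 (A (i.1 + 1))).filter (fun j => t (i.1 + 1) j ≤ n)).card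
  have key : ∀ i j, 1 ≤ i → 1 ≤ j → j ≤ A i → (t i j ≤ n ↔ j ≤ shp n b i) := by
    intro i j hi hj hji
    by_cases h : i ≤ n
    · obtain ⟨k, rfl⟩ : ∃ k, i = k + 1 := ⟨i - 1, by omega⟩
      have e1 := shp_succ n b ⟨k, by omega⟩
      simp only at e1
      rw [e1]
      exact card_init (A (k + 1)) (t (k + 1)) n
        (fun j l h1 h2 h3 => row_mono A (n + 1) t ht (k + 1) j l hi h1 h2 h3) j hj hji
    · rw [shp_big n b i (by omega)]
      have := col_ge A (n + 1) t ht ha i j hi hj hji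
      omega
  have hle : ∀ i, 1 ≤ i → shp n b i ≤ A i := by
    intro i hi
    by_cases h : i ≤ n
    · obtain ⟨k, rfl⟩ : ∃ k, i = k + 1 := ⟨i - 1, by omega⟩
      have e1 := shp_succ n b ⟨k, by omega⟩
      simp only at e1
      rw [e1]
      refine (Finset.card_filter_le _ _).trans ?_
      simp
    · rw [shp_big n b i (by omega)]
      omega
  have hb : b ∈ inter n a := by
    rw [mem_inter]
    intro i hi hin
    refine ⟨?_, hle i hi⟩
    rw [← hA]
    by_cases h0 : A (i + 1) = 0
    · omega
    · rw [← key i _ hi (by omega) (ha i hi)]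
      have h1 := ht.2.2.1 i (A (i + 1)) hi (by omega) le_rfl
      have h2 := ht.1 (i + 1) (A (i + 1)) (by omega) (by omega) le_rfl
      omega
  have hall := inter_all n a b hb
  refine ⟨b, hb, fun i j => if t i j ≤ n then t i j else 0, ⟨?_, ?_, ?_, ?_⟩, ?_⟩
  · intro i j hi hj hji
    have := hle i hi
    have h1 := (key i j hi hj (by omega)).2 hji
    have h2 := ht.1 i j hi hj (by omega)
    simp only [if_pos h1]
    omega
  · intro i j hi hj hji
    have := hle i hi
    have h1 := (key i j hi hj (by omega)).2 (by omega)
    have h2 := (key i (j + 1) hi (by omega) (by omega)).2 (by omega)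
    simp only [if_pos h1, if_pos h2]
    exact ht.2.1 i j hi hj (by omega)
  · intro i j hi hj hji
    have := hle (i + 1) (by omega)
    have := ha i hi
    have := inter_anti n a b hb i hi
    have h1 := (key i j hi hj (by omega)).2 (by omega)
    have h2 := (key (i + 1) j (by omega) (by omega) (by omega)).2 (by omega)
    simp only [if_pos h1, if_pos h2]
    exact ht.2.2.1 i j hi hj (by omega)
  · intro i j h
    by_cases h' : 1 ≤ i ∧ 1 ≤ j ∧ j ≤ A i
    · have := key i j h'.1 h'.2.1 h'.2.2
      have h3 : ¬ (t i j ≤ n) := by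
        rw [this]
        intro h4
        exact h ⟨h'.1, h'.2.1, h4⟩
      simp only [if_neg h3]
    · have := ht.2.2.2 i j h'
      simp [this]
  · funext i j
    unfold glue
    by_cases h' : 1 ≤ i ∧ 1 ≤ j ∧ j ≤ A i
    · rw [if_pos h']
      have h1 := key i j h'.1 h'.2.1 h'.2.2
      have h2 := ht.1 i j h'.1 h'.2.1 h'.2.2
      simp only
      split_ifs <;> omega
    · rw [if_neg h', ht.2.2.2 i j h']

lemma mem_tabs (n : ℕ) : ∀ (a : Fin n → ℕ), (∀ i, 1 ≤ i → shp n a (i + 1) ≤ shp n a i) →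
    ∀ t, t ∈ tabs n a ↔ IsSSYT (shp n a) n t := by
  induction n with
  | zero =>
    intro a _ t
    simp only [tabs, Finset.mem_singleton]
    constructor
    · rintro rfl
      have h0 : ∀ i, shp 0 a i = 0 := by
        intro i
        unfold shp
        rw [dif_neg (by omega)]
      refine ⟨?_, ?_, ?_, ?_⟩ <;> intro i j <;> simp [h0]
      all_goals omega
    · intro h
      funext i j
      apply h.2.2.2
      unfold shp
      rw [dif_neg (by omega)]
      omega
  | succ n ih =>
    intro a ha t
    simp only [tabs, Finset.mem_image, Finset.mem_sigma, Sigma.exists]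
    constructor
    · rintro ⟨b, s, ⟨hb, hs⟩, rfl⟩
      rw [ih b (inter_anti n a b hb)] at hs
      exact glue_ssyt n _ _ s (inter_all n a b hb) hs
    · intro ht
      obtain ⟨b, hb, s, hs, e⟩ := unglue n a ha t ht
      exact ⟨b, s, ⟨hb, (ih b (inter_anti n a b hb) s).2 hs⟩, e⟩

lemma glue_iff (n : ℕ) (a b : ℕ → ℕ) (t : ℕ → ℕ → ℕ)
    (hab : ∀ i, 1 ≤ i → a (i + 1) ≤ b i ∧ b i ≤ a i) (ht : IsSSYT b n t) (i j : ℕ) (hi : 1 ≤ i)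
    (hj : 1 ≤ j) : j ≤ b i ↔ (1 ≤ glue n a b t i j ∧ glue n a b t i j ≤ n) := by
  have := hab i hi
  have h1 := ht.1 i j hi hj
  unfold glue
  split_ifs with h h'
  · have := h1 h'
    omega
  · omega
  · constructor
    · intro h2
      exact absurd ⟨hi, hj, by omega⟩ h
    · omega

lemma glue_inj (n : ℕ) (a : Fin (n + 1) → ℕ)  :
    Set.InjOn (fun x : Σ _ : Fin n → ℕ, ℕ → ℕ → ℕ => glue n (shp (n + 1) a) (shp n x.1) x.2)
      ((inter n a).sigma (fun b => tabs n b)) := by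
  rintro ⟨b, s⟩ h1 ⟨b', s'⟩ h2 h
  simp only [Finset.coe_sigma, Set.mem_sigma_iff, Finset.mem_coe] at h1 h2 h
  obtain ⟨hb, hs⟩ := h1
  obtain ⟨hb', hs'⟩ := h2
  rw [mem_tabs n b (inter_anti n a b hb)] at hs
  rw [mem_tabs n b' (inter_anti n a b' hb')] at hs'
  have e : b = b' := by
    funext i
    have k1 := fun j => glue_iff n _ _ s (inter_all n a b hb) hs (i.1 + 1) j (by omega)
    have k2 := fun j => glue_iff n _ _ s' (inter_all n a b' hb') hs' (i.1 + 1) j (by omega)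
    rw [← h, ] at k2
    rw [shp_succ] at k1 k2
    have k3 := fun j hj => (k1 j hj).trans (k2 j hj).symm
    have l1 := k3 (b i)
    have l2 := k3 (b' i)
    omega
  subst e
  congr
  funext i j
  by_cases h' : 1 ≤ i ∧ 1 ≤ j ∧ j ≤ shp n b i
  · have := congrFun (congrFun h i) j
    have h3 := inter_all n a b hb i h'.1
    rwa [glue_pos _ _ _ _ i j h'.1 h'.2.1 (by omega), glue_pos _ _ _ _ i j h'.1 h'.2.1 (by omega),
      if_pos h'.2.2, if_pos h'.2.2] at this
  · rw [hs.2.2.2 i j h', hs'.2.2.2 i j h']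

lemma sum_shp (n : ℕ) (a : Fin n → ℕ) : ∑ i ∈ Finset.Icc 1 n, shp n a i = ∑ i, a i := by
  rw [← Finset.sum_congr rfl (fun i _ => shp_succ n a i),
    Fin.sum_univ_eq_sum_range (fun i => shp n a (i + 1)) n, Finset.range_eq_Ico,
    Finset.sum_Ico_add' (fun i => shp n a i) 0 n 1]
  rfl

lemma wt_glue (n : ℕ) (a : Fin (n + 1) → ℕ) (b : Fin n → ℕ) (hb : b ∈ inter n a) (t : ℕ → ℕ → ℕ) :
    wt (shp (n + 1) a) (n + 1) (glue n (shp (n + 1) a) (shp n b) t) + (n + 1) * ∑ i, b i =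
      wt (shp n b) n t + (n + 1) * ∑ i, a i := by
  have e1 : wt (shp n b) n t = wt (shp n b) (n + 1) t := by
    unfold wt
    rw [Finset.sum_Icc_succ_top (by omega), shp_big n b (n + 1) (by omega)]
    simp
  have e2 : ∑ i, b i = ∑ i ∈ Finset.Icc 1 (n + 1), shp n b i := by
    rw [Finset.sum_Icc_succ_top (by omega), shp_big n b (n + 1) (by omega), sum_shp]
    simp
  rw [e1, e2, ← sum_shp, Finset.mul_sum, Finset.mul_sum]
  unfold wt
  rw [← Finset.sum_add_distrib, ← Finset.sum_add_distrib]
  apply Finset.sum_congr rfl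
  intro i hi
  rw [Finset.mem_Icc] at hi
  have h := (inter_all n a b hb i hi.1).2
  set A := shp (n + 1) a
  set B := shp n b
  have : ∑ j ∈ Finset.Icc 1 (A i), glue n A B t i j
      = ∑ j ∈ Finset.Icc 1 (A i), (if j ≤ B i then t i j else n + 1) := by
    apply Finset.sum_congr rfl
    intro j hj
    rw [Finset.mem_Icc] at hj
    unfold glue
    rw [if_pos ⟨hi.1, hj.1, hj.2⟩]
  rw [this, Finset.sum_ite, Finset.sum_const]
  have f1 : (Finset.Icc 1 (A i)).filter (fun j => j ≤ B i) = Finset.Icc 1 (B i) := by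
    ext j
    simp only [Finset.mem_filter, Finset.mem_Icc]
    omega
  have f2 : (Finset.Icc 1 (A i)).filter (fun j => ¬ j ≤ B i) = Finset.Ioc (B i) (A i) := by
    ext j
    simp only [Finset.mem_filter, Finset.mem_Icc, Finset.mem_Ioc]
    omega
  rw [f1, f2, Nat.card_Ioc, smul_eq_mul]
  obtain ⟨d, hd⟩ := Nat.exists_eq_add_of_le h
  rw [hd]
  simp
  ring

/-- normalised sum -/
noncomputable def U (p q : ℂ) (n : ℕ) (a : Fin n → ℕ) : ℂ :=
  p ^ (n * ∑ i, a i) * ∑ t ∈ tabs n a, q ^ wt (shp n a) n t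

lemma U_rec (p q : ℂ) (hpq : p * q = 1) (n : ℕ) (a : Fin (n + 1) → ℕ) :
    U p q (n + 1) a = ∑ b ∈ inter n a, p ^ (∑ i, b i) * U p q n b := by
  classical
  unfold U
  conv_lhs => rw [tabs]
  rw [Finset.sum_image (glue_inj n a), Finset.sum_sigma, Finset.mul_sum]
  apply Finset.sum_congr rfl
  intro b hb
  rw [Finset.mul_sum (tabs n b), Finset.mul_sum (tabs n b), Finset.mul_sum (tabs n b)]
  apply Finset.sum_congr rfl
  intro t _
  have := wt_glue n a b hb t
  simp only
  set w1 := wt (shp (n + 1) a) (n + 1) (glue n (shp (n + 1) a) (shp n b) t)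
  set w2 := wt (shp n b) n t
  have hp : ∀ k, p ^ k * q ^ k = 1 := fun k => by rw [← mul_pow, hpq, one_pow]
  calc p ^ ((n + 1) * ∑ i, a i) * q ^ w1
      = p ^ ((n + 1) * ∑ i, a i) * (q ^ w1 * (p ^ ((n + 1) * ∑ i, b i) * q ^ ((n + 1) * ∑ i, b i))) := by
        rw [hp, mul_one]
    _ = p ^ ((n + 1) * ∑ i, a i) * p ^ ((n + 1) * ∑ i, b i) * q ^ (w1 + (n + 1) * ∑ i, b i) := by
        rw [pow_add q]; ring
    _ = (p ^ ((n + 1) * ∑ i, a i) * q ^ ((n + 1) * ∑ i, a i)) * p ^ ((n + 1) * ∑ i, b i) * q ^ w2 := by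
        rw [this, pow_add q]; ring
    _ = _ := by
        rw [hp, one_mul, add_mul, one_mul, pow_add p]; ring

lemma vdm_diff {n : ℕ} (x : Fin (n + 1) → ℂ) :
    (Matrix.vandermonde x).det =
      (Matrix.of fun i k : Fin n => x i.succ ^ (k.1 + 1) - x i.castSucc ^ (k.1 + 1)).det := by
  let B : Matrix (Fin (n + 1)) (Fin (n + 1)) ℂ := fun i k =>
    Fin.cases (x 0 ^ k.1) (fun i' => x i'.succ ^ k.1 - x i'.castSucc ^ k.1) i
  have h : (Matrix.vandermonde x).det = B.det := by
    apply Matrix.det_eq_of_forall_row_eq_smul_add_pred (fun _ => (1 : ℂ))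
    · intro j; simp [B, Matrix.vandermonde]
    · intro i j; simp [B, Matrix.vandermonde]
  rw [h, Matrix.det_succ_column_zero, Fin.sum_univ_succ]
  have : ∀ i : Fin n, B i.succ 0 = 0 := by intro i; simp [B]
  simp only [this]
  simp only [mul_zero, zero_mul, Finset.sum_const_zero, add_zero]
  have : B 0 0 = 1 := by simp [B]
  rw [this]
  simp only [Fin.val_zero, pow_zero, one_mul]
  congr 1

/-- shifted Vandermonde -/
noncomputable def V (p : ℂ) (n : ℕ) (a : Fin n → ℕ) : ℂ :=
  (Matrix.vandermonde (fun i : Fin n => p ^ (a i + (n - 1 - i.1)))).det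

lemma geo (y : ℂ) (c d e : ℕ) (h : c ≤ d) :
    y ^ (c + e) - y ^ (d + (e + 1)) = ∑ b ∈ Finset.Icc c d, (1 - y) * y ^ (b + e) := by
  induction d, h using Nat.le_induction with
  | base => simp; ring
  | succ d hd ih =>
    rw [Finset.sum_Icc_succ_top (by omega), ← ih]
    ring

lemma V_rec (p : ℂ) (n : ℕ) (a : Fin (n + 1) → ℕ) (ha : ∀ i : Fin n, a i.succ ≤ a i.castSucc) :
    V p (n + 1) a = ((∏ k : Fin n, (1 - p ^ (k.1 + 1))) * ∏ i : Fin n, p ^ (n - 1 - i.1)) *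
      ∑ b ∈ inter n a, p ^ (∑ i, b i) * V p n b := by
  unfold V
  rw [vdm_diff]
  have h1 : (Matrix.of fun i k : Fin n =>
      (p ^ (a i.succ + (n + 1 - 1 - i.succ.1))) ^ (k.1 + 1)
        - (p ^ (a i.castSucc + (n + 1 - 1 - i.castSucc.1))) ^ (k.1 + 1)) =
      (fun i : Fin n => ∑ b ∈ Finset.Icc (a i.succ) (a i.castSucc),
        (fun k : Fin n => (1 - p ^ (k.1 + 1)) * (p ^ (k.1 + 1)) ^ (b + (n - 1 - i.1)))) := by
    funext i k
    simp only [Matrix.of_apply, Finset.sum_apply]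
    rw [← geo _ _ _ _ (ha i), ← pow_mul, ← pow_mul, ← pow_mul, ← pow_mul]
    have hi := i.2
    congr 2
    · rw [mul_comm]; simp only [Fin.val_succ]; congr 2; omega
    · rw [mul_comm]; simp only [Fin.val_castSucc]; congr 2; omega
  rw [h1]
  have h2 := MultilinearMap.map_sum_finset
    (Matrix.detRowAlternating (n := Fin n) (R := ℂ)).toMultilinearMap
    (fun (i : Fin n) (b : ℕ) =>
      (fun k : Fin n => (1 - p ^ (k.1 + 1)) * (p ^ (k.1 + 1)) ^ (b + (n - 1 - i.1))))
    (fun i : Fin n => Finset.Icc (a i.succ) (a i.castSucc))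
  refine h2.trans ?_
  rw [Finset.mul_sum]
  unfold inter
  apply Finset.sum_congr rfl
  intro b _
  have h3 : (fun (i : Fin n) (k : Fin n) =>
      (1 - p ^ (k.1 + 1)) * (p ^ (k.1 + 1)) ^ (b i + (n - 1 - i.1))) =
      Matrix.of fun i k : Fin n => (1 - p ^ (k.1 + 1)) * (Matrix.of fun i k : Fin n =>
        p ^ (b i + (n - 1 - i.1)) *
          Matrix.vandermonde (fun i : Fin n => p ^ (b i + (n - 1 - i.1))) i k) i k := by
    funext i k
    simp only [Matrix.of_apply, Matrix.vandermonde_apply]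
    rw [← pow_mul, ← pow_mul, ← pow_add]
    ring
  have h4 := Matrix.det_mul_row (fun k : Fin n => (1 - p ^ (k.1 + 1))) (Matrix.of fun i k : Fin n =>
        p ^ (b i + (n - 1 - i.1)) *
          Matrix.vandermonde (fun i : Fin n => p ^ (b i + (n - 1 - i.1))) i k)
  have h5 := Matrix.det_mul_column (fun i : Fin n => p ^ (b i + (n - 1 - i.1)))
    (Matrix.vandermonde (fun i : Fin n => p ^ (b i + (n - 1 - i.1))))
  change Matrix.det (fun (i : Fin n) (k : Fin n) =>
      (1 - p ^ (k.1 + 1)) * (p ^ (k.1 + 1)) ^ (b i + (n - 1 - i.1))) = _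
  rw [h3, h4, h5]
  simp only [pow_add, Finset.prod_mul_distrib, Finset.prod_pow_eq_pow_sum]
  ring

/-- hooks and row differences together fill an interval -/
lemma hook_row (f : ℕ → ℂ) (r : ℕ) (l : ℕ → ℕ) (hA : ∀ i, l (i + 1) ≤ l i) (i : ℕ) (hi : i ≤ r) :
    (∏ j ∈ Finset.Icc 1 (l i), f (hin l r i j)) *
      ∏ k ∈ Finset.Icc (i + 1) r, f (l i - l k + (k - i)) = ∏ m ∈ Finset.Icc 1 (l i + (r - i)), f m := by
  have hanti : Antitone l := antitone_nat_of_succ_le hA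
  have hc1 : ∀ j k, i < k → k ≤ r → j ≤ l k →
      k - i ≤ ((Finset.Icc (i + 1) r).filter (fun i' => j ≤ l i')).card := by
    intro j k h1 h2 h3
    have : Finset.Icc (i + 1) k ⊆ (Finset.Icc (i + 1) r).filter (fun i' => j ≤ l i') := by
      intro m hm
      rw [Finset.mem_Icc] at hm
      rw [Finset.mem_filter, Finset.mem_Icc]
      exact ⟨⟨hm.1, by omega⟩, h3.trans (hanti hm.2)⟩
    have := Finset.card_le_card this
    simp at this
    omega
  have hc2 : ∀ j k, i < k → k ≤ r → l k < j →
      ((Finset.Icc (i + 1) r).filter (fun i' => j ≤ l i')).card + 1 ≤ k - i := by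
    intro j k h1 h2 h3
    have : (Finset.Icc (i + 1) r).filter (fun i' => j ≤ l i') ⊆ Finset.Ioo i k := by
      intro m hm
      rw [Finset.mem_filter, Finset.mem_Icc] at hm
      rw [Finset.mem_Ioo]
      refine ⟨by omega, ?_⟩
      by_contra h
      have := hanti (show k ≤ m by omega)
      omega
    have := Finset.card_le_card this
    simp at this
    omega
  have hc3 : ∀ j, ((Finset.Icc (i + 1) r).filter (fun i' => j ≤ l i')).card ≤ r - i := by
    intro j
    refine (Finset.card_filter_le _ _).trans ?_
    simp
  have hc4 : ∀ j j', j ≤ j' → ((Finset.Icc (i + 1) r).filter (fun i' => j' ≤ l i')).card ≤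
      ((Finset.Icc (i + 1) r).filter (fun i' => j ≤ l i')).card := by
    intro j j' h
    apply Finset.card_le_card
    intro m hm
    rw [Finset.mem_filter] at hm ⊢
    exact ⟨hm.1, by omega⟩
  have inj1 : Set.InjOn (hin l r i) (Finset.Icc 1 (l i)) := by
    intro j hj j' hj' h
    simp only [Finset.coe_Icc, Set.mem_Icc] at hj hj'
    unfold hin at h
    rcases lt_trichotomy j j' with h1 | h1 | h1
    · have := hc4 j j' h1.le; omega
    · exact h1
    · have := hc4 j' j h1.le; omega
  have inj2 : Set.InjOn (fun k => l i - l k + (k - i)) (Finset.Icc (i + 1) r) := by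
    intro j hj j' hj' h
    simp only [Finset.coe_Icc, Set.mem_Icc] at hj hj' h
    have := hanti (show i ≤ j by omega)
    have := hanti (show i ≤ j' by omega)
    rcases lt_trichotomy j j' with h1 | h1 | h1
    · have := hanti h1.le; omega
    · exact h1
    · have := hanti h1.le; omega
  have disj : Disjoint ((Finset.Icc 1 (l i)).image (hin l r i))
      ((Finset.Icc (i + 1) r).image (fun k => l i - l k + (k - i))) := by
    rw [Finset.disjoint_left]
    intro m h1 h2
    rw [Finset.mem_image] at h1 h2
    obtain ⟨j, hj, rfl⟩ := h1
    obtain ⟨k, hk, e⟩ := h2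
    rw [Finset.mem_Icc] at hj hk
    have := hanti (show i ≤ k by omega)
    unfold hin at e
    by_cases h : j ≤ l k
    · have := hc1 j k (by omega) (by omega) h; omega
    · have := hc2 j k (by omega) (by omega) (by omega); omega
  have hU : (Finset.Icc 1 (l i)).image (hin l r i) ∪
      ((Finset.Icc (i + 1) r).image (fun k => l i - l k + (k - i))) = Finset.Icc 1 (l i + (r - i)) := by
    apply Finset.eq_of_subset_of_card_le
    · intro m hm
      rw [Finset.mem_union, Finset.mem_image, Finset.mem_image] at hm
      rw [Finset.mem_Icc]
      rcases hm with ⟨j, hj, rfl⟩ | ⟨k, hk, rfl⟩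
      · rw [Finset.mem_Icc] at hj
        have := hc3 j
        unfold hin
        omega
      · rw [Finset.mem_Icc] at hk
        omega
    · rw [Finset.card_union_of_disjoint disj, Finset.card_image_of_injOn inj1,
        Finset.card_image_of_injOn inj2]
      simp
  rw [← hU, Finset.prod_union disj, Finset.prod_image inj1, Finset.prod_image inj2]

lemma cont_row (f : ℕ → ℂ) (r : ℕ) (m i : ℕ) (hi : i ≤ r) :
    (∏ j ∈ Finset.Icc 1 m, f (r + j - i)) * ∏ k ∈ Finset.Icc (i + 1) r, f (k - i)
      = ∏ m ∈ Finset.Icc 1 (m + (r - i)), f m := by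
  have h := hook_row f r (fun _ => 0) (fun _ => le_rfl) i hi
  simp only [Finset.Icc_eq_empty_of_lt zero_lt_one, Finset.prod_empty, one_mul, Nat.sub_zero,
    zero_add] at h
  rw [h]
  induction m with
  | zero => simp
  | succ m ih =>
    rw [Finset.prod_Icc_succ_top (by omega), show m + 1 + (r - i) = (m + (r - i)) + 1 by omega,
      Finset.prod_Icc_succ_top (by omega), ← ih, show r + (m + 1) - i = m + (r - i) + 1 by omega]
    ring

lemma row_quot (q : ℂ) (hq : ∀ m : ℕ, 0 < m → q ^ m ≠ 1) (r : ℕ) (l : ℕ → ℕ)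
    (hA : ∀ i, l (i + 1) ≤ l i) (i : ℕ) (hi : i ≤ r) :
    ∏ j ∈ Finset.Icc 1 (l i), (q ^ (r + j - i) - 1) / (q ^ hin l r i j - 1) =
    ∏ k ∈ Finset.Icc (i + 1) r, (q ^ (l i - l k + (k - i)) - 1) / (q ^ (k - i) - 1) := by
  have h1 := hook_row (fun m => q ^ m - 1) r l hA i hi
  have h2 := cont_row (fun m => q ^ m - 1) r (l i) i hi
  rw [← h1] at h2
  rw [Finset.prod_div_distrib, Finset.prod_div_distrib, div_eq_div_iff, h2, mul_comm]
  · rw [Finset.prod_ne_zero_iff]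
    intro j _
    exact sub_ne_zero.2 (hq _ (by unfold hin; omega))
  · rw [Finset.prod_ne_zero_iff]
    intro j hj
    rw [Finset.mem_Icc] at hj
    exact sub_ne_zero.2 (hq _ (by omega))

lemma UV (p q : ℂ) (hpq : p * q = 1) (n : ℕ) : ∃ C : ℂ, ∀ a : Fin n → ℕ,
    (∀ i, 1 ≤ i → shp n a (i + 1) ≤ shp n a i) → V p n a = C * U p q n a := by
  induction n with
  | zero =>
    refine ⟨1, ?_⟩
    intro a _
    simp [V, U, tabs, wt]
  | succ n ih =>
    obtain ⟨C, hC⟩ := ih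
    refine ⟨((∏ k : Fin n, (1 - p ^ (k.1 + 1))) * ∏ i : Fin n, p ^ (n - 1 - i.1)) * C, ?_⟩
    intro a ha
    have ha' : ∀ i : Fin n, a i.succ ≤ a i.castSucc := by
      intro i
      have := ha (i.1 + 1) (by omega)
      have e2 := shp_succ (n + 1) a (Fin.succ i)
      have e3 := shp_succ (n + 1) a (Fin.castSucc i)
      simp only [Fin.val_succ, Fin.val_castSucc] at e2 e3
      rwa [e2, e3] at this
    rw [V_rec p n a ha', U_rec p q hpq, mul_assoc _ C, Finset.mul_sum (inter n a) _ C]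
    congr 1
    apply Finset.sum_congr rfl
    intro b hb
    rw [hC b (inter_anti n a b hb)]
    ring

lemma ssyt_congr (l l' : ℕ → ℕ) (r : ℕ) (t : ℕ → ℕ → ℕ) (h : ∀ i, 1 ≤ i → l i = l' i)
    (ht : IsSSYT l r t) : IsSSYT l' r t := by
  obtain ⟨h1, h2, h3, h4⟩ := ht
  refine ⟨?_, ?_, ?_, ?_⟩
  · intro i j hi hj hl
    exact h1 i j hi hj (by rw [h i hi]; exact hl)
  · intro i j hi hj hl
    exact h2 i j hi hj (by rw [h i hi]; exact hl)
  · intro i j hi hj hl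
    exact h3 i j hi hj (by rw [h (i + 1) (by omega)]; exact hl)
  · intro i j hn
    apply h4 i j
    rintro ⟨a, b, c⟩
    rw [h i a] at c
    exact hn ⟨a, b, c⟩

lemma shp_zero (n i : ℕ) : shp n (fun _ => 0) i = 0 := by
  unfold shp
  split_ifs <;> rfl

lemma U_zero (p q : ℂ) (n : ℕ) : U p q n (fun _ => 0) = 1 := by
  have h : tabs n (fun _ => 0) = {fun _ _ => 0} := by
    ext t
    rw [mem_tabs n _ (fun i _ => by rw [shp_zero, shp_zero]), Finset.mem_singleton]
    constructor
    · intro h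
      funext i j
      apply h.2.2.2
      rw [shp_zero]
      omega
    · rintro rfl
      refine ⟨?_, ?_, ?_, ?_⟩ <;> intro i j <;> simp [shp_zero]
      all_goals omega
  unfold U
  rw [h]
  simp [wt]

lemma prod_Icc_fin (r : ℕ) (F : ℕ → ℂ) : ∏ i ∈ Finset.Icc 1 r, F i = ∏ i : Fin r, F (i.1 + 1) := by
  rw [Fin.prod_univ_eq_prod_range (fun i => F (i + 1)) r, Finset.range_eq_Ico,
    Finset.prod_Ico_add' F 0 r 1]
  rfl

lemma prod_Ioi_fin (r : ℕ) (i : Fin r) (F : ℕ → ℂ) :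
    ∏ k ∈ Finset.Icc (i.1 + 1 + 1) r, F k = ∏ j ∈ Finset.Ioi i, F (j.1 + 1) := by
  symm
  apply Finset.prod_bij (fun (j : Fin r) _ => j.1 + 1)
  · intro j hj
    rw [Finset.mem_Ioi] at hj
    rw [Finset.mem_Icc]
    have := Fin.lt_def.1 hj
    omega
  · intro j _ j' _ h
    ext
    omega
  · intro k hk
    rw [Finset.mem_Icc] at hk
    refine ⟨⟨k - 1, by omega⟩, ?_, ?_⟩
    · rw [Finset.mem_Ioi, Fin.lt_def]
      simp only
      omega
    · simp only
      omega
  · intro j _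
    rfl

lemma V_factor (p q : ℂ) (hpq : p * q = 1) (x y : ℕ) (h : x ≤ y) :
    p ^ x - p ^ y = p ^ y * (q ^ (y - x) - 1) := by
  obtain ⟨d, rfl⟩ := Nat.exists_eq_add_of_le h
  have hp : p ^ d * q ^ d = 1 := by rw [← mul_pow, hpq, one_pow]
  rw [Nat.add_sub_cancel_left, pow_add, mul_sub, mul_assoc, hp]
  ring

lemma V_formula (p q : ℂ) (hpq : p * q = 1) (r : ℕ) (l : ℕ → ℕ) (hA : ∀ i, l (i + 1) ≤ l i) :
    V p r (fun i => l (i.1 + 1)) = ∏ i : Fin r, ∏ j ∈ Finset.Ioi i,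
      (p ^ (l (i.1 + 1) + (r - 1 - i.1)) *
        (q ^ (l (i.1 + 1) - l (j.1 + 1) + (j.1 + 1 - (i.1 + 1))) - 1)) := by
  unfold V
  rw [Matrix.det_vandermonde]
  apply Finset.prod_congr rfl
  intro i _
  apply Finset.prod_congr rfl
  intro j hj
  have hij := Fin.lt_def.1 (Finset.mem_Ioi.1 hj)
  have hl := antitone_nat_of_succ_le hA (show i.1 + 1 ≤ j.1 + 1 by omega)
  have hj := j.2
  simp only
  rw [V_factor p q hpq _ _ (by omega)]
  congr 3
  omega

lemma V_quot (p q : ℂ) (hpq : p * q = 1) (hq : ∀ m : ℕ, 0 < m → q ^ m ≠ 1)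
    (r : ℕ) (l : ℕ → ℕ) (hA : ∀ i, l (i + 1) ≤ l i) :
    V p r (fun _ => 0) ≠ 0 ∧
    V p r (fun i => l (i.1 + 1)) / V p r (fun _ => 0) =
      (∏ i : Fin r, p ^ (l (i.1 + 1) * (r - 1 - i.1))) *
      ∏ i ∈ Finset.Icc 1 r, ∏ k ∈ Finset.Icc (i + 1) r,
        (q ^ (l i - l k + (k - i)) - 1) / (q ^ (k - i) - 1) := by
  have hp0 : p ≠ 0 := left_ne_zero_of_mul_eq_one hpq
  have h0 := V_formula p q hpq r (fun _ => 0) (fun _ => le_rfl)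
  have h1 := V_formula p q hpq r l hA
  constructor
  · rw [h0]
    refine Finset.prod_ne_zero_iff.2 fun i _ => Finset.prod_ne_zero_iff.2 fun j hj => ?_
    have hij := Fin.lt_def.1 (Finset.mem_Ioi.1 hj)
    exact mul_ne_zero (pow_ne_zero _ hp0) (sub_ne_zero.2 (hq _ (by omega)))
  · rw [h0, h1, prod_Icc_fin, ← Finset.prod_div_distrib, ← Finset.prod_mul_distrib]
    apply Finset.prod_congr rfl
    intro i _
    rw [prod_Ioi_fin r i, ← Finset.prod_div_distrib, pow_mul]
    have hc : (p ^ l (i.1 + 1)) ^ (r - 1 - i.1) = ∏ j ∈ Finset.Ioi i, p ^ l (i.1 + 1) := by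
      rw [Finset.prod_const, Fin.card_Ioi]
    rw [hc, ← Finset.prod_mul_distrib]
    apply Finset.prod_congr rfl
    intro j _
    simp only [Nat.sub_zero, zero_add]
    rw [pow_add p, mul_div_mul_comm, mul_div_assoc, div_self (pow_ne_zero _ hp0), mul_one]

lemma hcf_ne (r : ℕ) (l : ℕ → ℕ)
    (hA : ∀ i, l (i + 1) ≤ l i) (hr : ∀ i, r < i → l i = 0)
    (q : ℂ) (hq : ∀ m : ℕ, 0 < m → q ^ m ≠ 1) (hq0 : q ≠ 0) :
    (∑ᶠ t ∈ {t : ℕ → ℕ → ℕ | IsSSYT l r t}, q ^ wt l r t) =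
      q ^ (∑ i ∈ Finset.Icc 1 r, i * l i) *
        ∏ i ∈ Finset.Icc 1 r, ∏ j ∈ Finset.Icc 1 (l i),
          (q ^ (r + j - i) - 1) / (q ^ hin l r i j - 1) := by
  set a : Fin r → ℕ := fun i => l (i.1 + 1) with ha
  have hs : ∀ i, 1 ≤ i → shp r a i = l i := by
    intro i hi
    by_cases h : i ≤ r
    · obtain ⟨k, rfl⟩ : ∃ k, i = k + 1 := ⟨i - 1, by omega⟩
      exact shp_succ r a ⟨k, by omega⟩
    · rw [shp_big r a i (by omega), hr i (by omega)]
  have hanti : ∀ i, 1 ≤ i → shp r a (i + 1) ≤ shp r a i := by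
    intro i hi
    rw [hs i hi, hs (i + 1) (by omega)]
    exact hA i
  have hset : {t : ℕ → ℕ → ℕ | IsSSYT l r t} = ↑(tabs r a) := by
    ext t
    rw [Set.mem_setOf_eq, Finset.mem_coe, mem_tabs r a hanti]
    exact ⟨ssyt_congr _ _ r t fun i hi => (hs i hi).symm, ssyt_congr _ _ r t hs⟩
  have hwt : ∀ t, wt (shp r a) r t = wt l r t := by
    intro t
    unfold wt
    apply Finset.sum_congr rfl
    intro i hi
    rw [hs i (Finset.mem_Icc.1 hi).1]
  rw [hset, finsum_mem_coe_finset]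
  have hpq : q⁻¹ * q = 1 := inv_mul_cancel₀ hq0
  obtain ⟨C, hC⟩ := UV q⁻¹ q hpq r
  have e1 := hC a hanti
  have e2 := hC (fun _ => 0) (fun i _ => by rw [shp_zero, shp_zero])
  rw [U_zero, mul_one] at e2
  obtain ⟨hne, hV⟩ := V_quot q⁻¹ q hpq hq r l hA
  rw [← e2] at e1
  have e3 : U q⁻¹ q r a = V q⁻¹ r a / V q⁻¹ r (fun _ => 0) := by
    rw [e1, mul_div_cancel_left₀ _ hne]
  rw [hV] at e3
  unfold U at e3
  simp only [hwt] at e3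
  have e4 : ∏ i ∈ Finset.Icc 1 r, ∏ j ∈ Finset.Icc 1 (l i),
      (q ^ (r + j - i) - 1) / (q ^ hin l r i j - 1) = ∏ i ∈ Finset.Icc 1 r,
      ∏ k ∈ Finset.Icc (i + 1) r, (q ^ (l i - l k + (k - i)) - 1) / (q ^ (k - i) - 1) :=
    Finset.prod_congr rfl fun i hi => row_quot q hq r l hA i (Finset.mem_Icc.1 hi).2
  rw [e4]
  have hk : ∀ k, q ^ k * q⁻¹ ^ k = 1 := fun k => by
    rw [← mul_pow, mul_inv_cancel₀ hq0, one_pow]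
  have e5 : q ^ (r * ∑ i, a i) * ∏ i : Fin r, q⁻¹ ^ (l (i.1 + 1) * (r - 1 - i.1)) =
      q ^ (∑ i ∈ Finset.Icc 1 r, i * l i) := by
    rw [← Finset.prod_pow_eq_pow_sum, prod_Icc_fin, Finset.mul_sum, ← Finset.prod_pow_eq_pow_sum,
      ← Finset.prod_mul_distrib]
    apply Finset.prod_congr rfl
    intro i _
    have hi := i.2
    have : r * a i = (i.1 + 1) * l (i.1 + 1) + l (i.1 + 1) * (r - 1 - i.1) := by
      rw [mul_comm (i.1 + 1), ← mul_add, mul_comm]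
      congr 1
      omega
    rw [this, pow_add, mul_assoc, hk, mul_one]
  rw [← e5, mul_assoc, ← e3, ← mul_assoc, hk, one_mul]

lemma hcf_zero (r : ℕ) (l : ℕ → ℕ)
    (hr : ∀ i, r < i → l i = 0) :
    (∑ᶠ t ∈ {t : ℕ → ℕ → ℕ | IsSSYT l r t}, (0 : ℂ) ^ wt l r t) =
      0 ^ (∑ i ∈ Finset.Icc 1 r, i * l i) *
        ∏ i ∈ Finset.Icc 1 r, ∏ j ∈ Finset.Icc 1 (l i),
          ((0 : ℂ) ^ (r + j - i) - 1) / (0 ^ hin l r i j - 1) := by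
  by_cases h : ∀ i ∈ Finset.Icc 1 r, l i = 0
  · have h' : ∀ i, 1 ≤ i → l i = 0 := by
      intro i hi
      by_cases hir : i ≤ r
      · exact h i (Finset.mem_Icc.2 ⟨hi, hir⟩)
      · exact hr i (by omega)
    have hset : {t : ℕ → ℕ → ℕ | IsSSYT l r t} = {fun _ _ => 0} := by
      ext t
      rw [Set.mem_setOf_eq, Set.mem_singleton_iff]
      constructor
      · intro ht
        funext i j
        apply ht.2.2.2
        rintro ⟨h1, h2, h3⟩
        rw [h' i h1] at h3
        omega
      · rintro rfl
        refine ⟨?_, ?_, ?_, fun _ _ _ => rfl⟩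
        · intro i j hi hj hl
          rw [h' i hi] at hl
          omega
        · intro i j hi hj hl
          exact le_rfl
        · intro i j hi hj hl
          rw [h' (i + 1) (by omega)] at hl
          omega
    rw [hset, finsum_mem_singleton]
    have e1 : ∑ i ∈ Finset.Icc 1 r, i * l i = 0 :=
      Finset.sum_eq_zero fun i hi => by rw [h i hi, mul_zero]
    have e2 : ∏ i ∈ Finset.Icc 1 r, ∏ j ∈ Finset.Icc 1 (l i),
          ((0 : ℂ) ^ (r + j - i) - 1) / (0 ^ hin l r i j - 1) = 1 :=
      Finset.prod_eq_one fun i hi => by rw [h i hi]; simp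
    rw [e1, e2]
    simp [wt]
  · push Not at h
    obtain ⟨i, hi, hl⟩ := h
    have hi' := Finset.mem_Icc.1 hi
    have e1 : ∑ i ∈ Finset.Icc 1 r, i * l i ≠ 0 := by
      intro h0
      have := Finset.sum_eq_zero_iff.1 h0 i hi
      rcases Nat.mul_eq_zero.1 this with h | h <;> omega
    rw [zero_pow e1, zero_mul]
    apply finsum_mem_eq_zero_of_forall_eq_zero
    intro t ht
    apply zero_pow
    intro h0
    have h1 := Finset.sum_eq_zero_iff.1 h0 i hi
    have h2 := Finset.sum_eq_zero_iff.1 h1 1 (Finset.mem_Icc.2 ⟨le_rfl, by omega⟩)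
    have := (ht.1 i 1 hi'.1 le_rfl (by omega)).1
    omega

/-- **Stanley's Hook Content Formula.** For a partition `λ` with at most `r`
rows and any `q` that is not a root of unity,
`s_λ(q, q², …, q^r) = q^{B(λ)} ∏_{(i,j) ∈ [λ]} (q^{r+j-i} - 1)/(q^{h_{(i,j)}(λ)} - 1)`
where `B(λ) = Σ_i i·λ_i`. -/
theorem hook_content_formula (r : ℕ) (hr0 : 0 < r) (l : ℕ → ℕ)
    (hA : ∀ i, l (i + 1) ≤ l i) (hr : ∀ i, r < i → l i = 0)
    (q : ℂ) (hq : ∀ m : ℕ, 0 < m → q ^ m ≠ 1) :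
    (∑ᶠ t ∈ {t : ℕ → ℕ → ℕ | IsSSYT l r t}, q ^ wt l r t) =
      q ^ (∑ i ∈ Finset.Icc 1 r, i * l i) *
        ∏ i ∈ Finset.Icc 1 r, ∏ j ∈ Finset.Icc 1 (l i),
          (q ^ (r + j - i) - 1) / (q ^ hin l r i j - 1) := by
  by_cases hq0 : q = 0
  · subst hq0
    exact hcf_zero r l hr
  · exact hcf_ne r l hA hr q hq hq0
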